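/- arXiv:0901.0205 — 2 statements merged into one kernel-verified Lean document; each statement's English description precedes it below -/
import Mathlib

section
/- Let R : V → V → Prop be a digraph on a finite vertex type V, let S₀, R₁, R₂ ⊆ V with L⁰ ⊆ R₁ ∪ R₂, let N : V → ℕ, and let α, α' ≥ 1 be reals. Let P and Q be finite collections of simple paths in the digraph such that: within each of the two collections, paths are internally vertex-disjoint; every path of P ends in R₁ and every path of Q ends in R₂; every path of P and of Q starts at a vertex of S₀ ∪ ((R₁ ∪ R₂) \ L⁰); each vertex is the start of at most one path of P and of at most one path of Q; for every A ∈ R₁ at least N A / α paths of P end at A; and for every A ∈ R₂ at least N A / α' paths of Q end at A. Then there exists a finite collection Q* of simple paths in the digraph such that: every vertex of V is a non-final vertex of at most one path of Q*; every path of Q* starts at a vertex of S₀ ∪ ((R₁ ∪ R₂) \ L⁰), with at most one path of Q* starting at any vertex; and for every A ∈ R₁ ∪ R₂ there are at least ⌊N A / (α + α')⌋ paths of Q* ending at A. -/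
/-!
The required collection is an integral flow, and two halves of the hypothesis provide a fractional
one: `P` with weight `α / (α + α')` plus `Q` with weight `α' / (α + α')`. Instead of an
integrality theorem for flows, the proof encodes flows as bipartite matchings and uses Hall's
theorem.

Put `d A = ⌊N A / (α + α')⌋` for `A ∈ R₁ ∪ R₂`. The elements to be matched are the `d A` *slots*
of each target `A`, and all vertices `v`, each thought of as a potential non-final vertex. The
tokens are `inl u` (preceded by `u`) and `inr s` (the path starts at `s`). A slot of `A` may
receive `inl u` with `R u A`, or `inr A` if `A` is an allowed start; a vertex `v` may receive the
same tokens relative to `v`, and also `inl v`, meaning that `v` is idle. Given an injective choice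
of tokens, following predecessors backwards from a slot must stop at a start, by finiteness and
injectivity; no vertex is visited by the traces from two different slots (`trace_unique`), and
shortening each trace to a simple path gives the collection (`exists_paths_of_injective`).

Hall's condition (`card_add_card_le_tokens`): for a set `U` of vertices and a set `B` of targets,
each of the collections `P` and `Q` by itself shows that at least
`|U| + #{paths ending in B}` tokens are available. The convex combination of the two bounds
with weights `α / (α + α')` and `α' / (α + α')` is at least `|U| + ∑ A ∈ B, d A`.
-/

/-- A simple path in the digraph `R`: a nonempty list of pairwise distinct vertices in which
`R` holds between every pair of consecutive vertices. -/
def IsSimplePath {V : Type*} (R : V → V → Prop) (p : List V) : Prop :=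
  p ≠ [] ∧ p.Nodup ∧ p.Chain' R

/-! ### Tokens and Hall's condition -/

/-- The ways a path may arrive at `v`: `inl u` stands for a step from the predecessor `u`, and
`inr v` for starting at `v`, which must then lie in `S`. -/
def arrivals {V : Type*} (R : V → V → Prop) (S : Set V) (v : V) : Set (V ⊕ V) :=
  {y | (∃ u, y = Sum.inl u ∧ R u v) ∨ (y = Sum.inr v ∧ v ∈ S)}

/-- `ArrivesBy p v y`: along the list `p`, the vertex `v` is reached by the token `y`, that is,
`v` is the head of `p` and `y = inr v`, or `y = inl u` with `u` right before `v` in `p`. -/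
def ArrivesBy {V : Type*} (p : List V) (v : V) (y : V ⊕ V) : Prop :=
  (y = Sum.inr v ∧ p.head? = some v) ∨
    ∃ (i : ℕ) (u : V), y = Sum.inl u ∧ p[i]? = some u ∧ p[i + 1]? = some v

lemma exists_arrivesBy {V : Type*} {p : List V} {v : V} (hv : v ∈ p) : ∃ y, ArrivesBy p v y := by
  obtain ⟨i, hi⟩ := List.mem_iff_getElem?.1 hv
  cases i with
  | zero => exact ⟨_, Or.inl ⟨rfl, by rw [List.head?_eq_getElem?]; exact hi⟩⟩
  | succ i =>
    have h1 : i + 1 < p.length := (List.getElem?_eq_some_iff.1 hi).1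
    exact ⟨_, Or.inr ⟨i, p[i], rfl, List.getElem?_eq_getElem (by omega), hi⟩⟩

lemma mem_dropLast_of_getElem? {V : Type*} {p : List V} {u v : V} {i : ℕ}
    (hu : p[i]? = some u) (hv : p[i + 1]? = some v) : u ∈ p.dropLast := by
  have h1 : i + 1 < p.length := (List.getElem?_eq_some_iff.1 hv).1
  rw [List.mem_iff_getElem?]
  refine ⟨i, ?_⟩
  rw [List.getElem?_dropLast, if_pos (by omega), hu]

lemma ArrivesBy.mem_arrivals {V : Type*} {R : V → V → Prop} {S : Set V} {p : List V} {v : V}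
    {y : V ⊕ V} (h : ArrivesBy p v y) (hp : p.IsChain R)
    (hS : ∃ s ∈ S, p.head? = some s) : y ∈ arrivals R S v := by
  rcases h with ⟨rfl, hv⟩ | ⟨i, u, rfl, hu, hv⟩
  · obtain ⟨s, hs, h⟩ := hS
    right
    rw [h] at hv
    exact ⟨rfl, Option.some.inj hv ▸ hs⟩
  · left
    refine ⟨u, rfl, ?_⟩
    obtain ⟨h1, h2⟩ := List.getElem?_eq_some_iff.1 hv
    obtain ⟨h3, h4⟩ := List.getElem?_eq_some_iff.1 hu
    have := List.isChain_iff_getElem.1 hp i h1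
    rwa [h2, h4] at this

/-- In a family of internally disjoint simple paths with distinct starts, a token determines both
the path and the vertex reached by it. -/
lemma ArrivesBy.unique {V : Type*} {P : Finset (List V)} (hnd : ∀ p ∈ P, p.Nodup)
    (hint : ∀ p ∈ P, ∀ q ∈ P, p ≠ q → ∀ v ∈ p.dropLast, v ∉ q)
    (hstart : ∀ p ∈ P, ∀ q ∈ P, ∀ v, p.head? = some v → q.head? = some v → p = q)
    {p q : List V} (hp : p ∈ P) (hq : q ∈ P) {v w : V} {y : V ⊕ V}
    (h : ArrivesBy p v y) (h' : ArrivesBy q w y) : p = q ∧ v = w := by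
  rcases h with ⟨rfl, hv⟩ | ⟨i, u, rfl, hu, hv⟩
  · rcases h' with ⟨h1, hw⟩ | ⟨i, u, h1, -⟩
    · obtain rfl := Sum.inr.inj h1
      exact ⟨hstart p hp q hq v hv hw, rfl⟩
    · cases h1
  · rcases h' with ⟨h1, hw⟩ | ⟨j, u', h1, hu', hw⟩
    · cases h1
    · obtain rfl := Sum.inl.inj h1
      have hpq : p = q := by
        by_contra hne
        exact hint p hp q hq hne u (mem_dropLast_of_getElem? hu hv) (List.mem_of_getElem? hu')
      subst hpq
      refine ⟨rfl, ?_⟩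
      have hij : i = j := by
        obtain ⟨h3, h4⟩ := List.getElem?_eq_some_iff.1 hu
        obtain ⟨h5, h6⟩ := List.getElem?_eq_some_iff.1 hu'
        exact (hnd p hp).getElem_inj_iff.1 (h4.trans h6.symm)
      subst hij
      rw [hv] at hw
      exact Option.some.inj hw

/-- Lower bound for the number of tokens available to a set `U` of vertices and the targets `B`.
A vertex of `U` that is non-final on a path of `P` is assigned the token by which this path reaches
it, any other vertex of `U` stays idle, and a path ending in `B` is assigned the token by which
it reaches its end; different elements are assigned different tokens. -/
lemma card_add_card_le_tokens {V : Type*} [DecidableEq V] {R : V → V → Prop}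
    {S : Set V} {P : Finset (List V)} (hpath : ∀ p ∈ P, IsSimplePath R p)
    (hint : ∀ p ∈ P, ∀ q ∈ P, p ≠ q → ∀ v ∈ p.dropLast, v ∉ q)
    (hS : ∀ p ∈ P, ∃ v ∈ S, p.head? = some v)
    (hstart : ∀ v : V, (P.filter (fun p => p.head? = some v)).card ≤ 1)
    (U B : Finset V) (M : Finset (V ⊕ V)) (hU : ∀ u ∈ U, Sum.inl u ∈ M)
    (hM : ∀ v, v ∈ U ∨ v ∈ B → ∀ y ∈ arrivals R S v, y ∈ M) :
    U.card + ∑ A ∈ B, (P.filter (fun p => p.getLast? = some A)).card ≤ M.card := by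
  classical
  have hnd : ∀ p ∈ P, p.Nodup := fun p hp => (hpath p hp).2.1
  have hstart' : ∀ p ∈ P, ∀ q ∈ P, ∀ v, p.head? = some v → q.head? = some v → p = q := by
    intro p hp q hq v h1 h2
    exact Finset.card_le_one.1 (hstart v) p (by simp [hp, h1]) q (by simp [hq, h2])
  have key := @ArrivesBy.unique V P hnd hint hstart'
  have hlast : ∀ p ∈ P, ∀ u, u ∈ p.dropLast → p.getLast? ≠ some u := by
    intro p hp u hu h
    have h1 := List.dropLast_append_getLast? u h
    have h2 := hnd p hp
    rw [← h1, List.nodup_append] at h2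
    exact h2.2.2 u hu u (by simp) rfl
  -- a token that reaches some vertex on a path differs from the idle token of an unused vertex
  have hidle : ∀ p ∈ P, ∀ u, (∀ q ∈ P, u ∉ q.dropLast) → ∀ w, ¬ ArrivesBy p w (Sum.inl u) := by
    rintro p hp u hu w (⟨h, -⟩ | ⟨i, u', h, h1, h2⟩)
    · cases h
    · obtain rfl := Sum.inl.inj h
      exact hu p hp (mem_dropLast_of_getElem? h1 h2)
  let r : V ⊕ List V → V ⊕ V → Prop := fun x y => match x with
    | Sum.inl u => (∃ p ∈ P, u ∈ p.dropLast ∧ ArrivesBy p u y) ∨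
        ((∀ p ∈ P, u ∉ p.dropLast) ∧ y = Sum.inl u)
    | Sum.inr p => ∃ A, p.getLast? = some A ∧ ArrivesBy p A y
  let PB := B.biUnion fun A => P.filter (fun p => p.getLast? = some A)
  have hPB : ∀ p ∈ PB, p ∈ P ∧ ∃ A ∈ B, p.getLast? = some A := by
    intro p hp
    obtain ⟨A, hA, h⟩ := Finset.mem_biUnion.1 hp
    rw [Finset.mem_filter] at h
    exact ⟨h.1, A, hA, h.2⟩
  have hcard : PB.card = ∑ A ∈ B, (P.filter (fun p => p.getLast? = some A)).card := by
    refine Finset.card_biUnion fun A _ A' _ hne => ?_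
    refine Finset.disjoint_left.2 fun p h1 h2 => hne ?_
    rw [Finset.mem_filter] at h1 h2
    exact Option.some.inj (h1.2.symm.trans h2.2)
  rw [← hcard, ← Finset.card_disjSum]
  refine Finset.card_le_card_of_forall_subsingleton r ?_ ?_
  · intro x hx
    rcases Finset.mem_disjSum.1 hx with ⟨u, hu, rfl⟩ | ⟨p, hp, rfl⟩
    · by_cases h : ∃ p ∈ P, u ∈ p.dropLast
      · obtain ⟨p, hp, hup⟩ := h
        obtain ⟨y, hy⟩ := exists_arrivesBy (List.mem_of_mem_dropLast hup)
        exact ⟨y, hM u (Or.inl hu) y (hy.mem_arrivals (hpath p hp).2.2 (hS p hp)),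
          Or.inl ⟨p, hp, hup, hy⟩⟩
      · push Not at h
        exact ⟨_, hU u hu, Or.inr ⟨h, rfl⟩⟩
    · obtain ⟨hp, A, hA, h⟩ := hPB p hp
      obtain ⟨y, hy⟩ := exists_arrivesBy (List.mem_of_getLast? h)
      exact ⟨y, hM A (Or.inr hA) y (hy.mem_arrivals (hpath p hp).2.2 (hS p hp)), A, h, hy⟩
  · rintro y - x ⟨hx, hxy⟩ x' ⟨hx', hxy'⟩
    rcases Finset.mem_disjSum.1 hx with ⟨u, hu, rfl⟩ | ⟨p, hp, rfl⟩ <;>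
    rcases Finset.mem_disjSum.1 hx' with ⟨u', hu', rfl⟩ | ⟨p', hp', rfl⟩
    · rcases hxy with ⟨p, hp, hup, h⟩ | ⟨h, rfl⟩ <;>
      rcases hxy' with ⟨p', hp', hup', h'⟩ | ⟨h', e⟩
      · rw [(key hp hp' h h').2]
      · subst e
        exact (hidle p hp _ h' _ h).elim
      · exact (hidle p' hp' _ h _ h').elim
      · rw [Sum.inl.inj e]
    · obtain ⟨A, hA, h'⟩ := hxy'
      have hp' := (hPB p' hp').1
      rcases hxy with ⟨p, hp, hup, h⟩ | ⟨h, rfl⟩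
      · obtain ⟨rfl, rfl⟩ := key hp hp' h h'
        exact (hlast p hp _ hup hA).elim
      · exact (hidle p' hp' _ h _ h').elim
    · obtain ⟨A, hA, h⟩ := hxy
      have hp := (hPB p hp).1
      rcases hxy' with ⟨p', hp', hup, h'⟩ | ⟨h', rfl⟩
      · obtain ⟨rfl, rfl⟩ := key hp hp' h h'
        exact (hlast p hp _ hup hA).elim
      · exact (hidle p hp _ h' _ h).elim
    · obtain ⟨A, hA, h⟩ := hxy
      obtain ⟨A', hA', h'⟩ := hxy'
      rw [(key (hPB p hp).1 (hPB p' hp').1 h h').1]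

/-! ### Paths from an injective assignment of tokens -/

/-- Reachability is witnessed by a simple path. -/
lemma exists_isSimplePath {V : Type*} {R : V → V → Prop} {a b : V}
    (h : Relation.ReflTransGen R a b) :
    ∃ p, IsSimplePath R p ∧ p.head? = some a ∧ p.getLast? = some b := by
  induction h using Relation.ReflTransGen.head_induction_on with
  | refl => exact ⟨[b], ⟨by simp, by simp, List.isChain_singleton b⟩, rfl, rfl⟩
  | @head a c hac _ ih =>
    obtain ⟨p, ⟨hne, hnd, hch⟩, hhead, hlast⟩ := ih
    change p.IsChain R at hch
    by_cases ha : a ∈ p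
    · obtain ⟨l, l', rfl⟩ := List.append_of_mem ha
      refine ⟨a :: l', ⟨by simp, hnd.of_append_right, hch.right_of_append⟩, rfl, ?_⟩
      rw [← hlast, List.getLast?_append]
      simp [List.getLast?_cons]
    · cases p with
      | nil => exact (hne rfl).elim
      | cons x p =>
        obtain rfl : x = c := by simpa using hhead
        refine ⟨a :: x :: p, ⟨by simp, List.nodup_cons.2 ⟨ha, hnd⟩,
          List.isChain_cons_cons.2 ⟨hac, hch⟩⟩, rfl, ?_⟩
        rw [← hlast]
        simp [List.getLast?_cons]

lemma exists_rel_of_mem_dropLast {V : Type*} {R : V → V → Prop} {p : List V}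
    (hp : p.IsChain R) {v : V} (hv : v ∈ p.dropLast) : ∃ w, R v w := by
  obtain ⟨i, hi, rfl⟩ := List.mem_iff_getElem.1 hv
  rw [List.length_dropLast] at hi
  rw [List.getElem_dropLast]
  exact ⟨_, List.isChain_iff_getElem.1 hp i (by omega)⟩

/-- The tracing relation on slots and vertices determined by an assignment `f` of tokens: from `x`,
go back to the vertex `u` if `f x = inl u`. -/
def TraceStep {ι V : Type*} (f : ι ⊕ V → V ⊕ V) (x y : ι ⊕ V) : Prop :=
  ∃ u, f x = Sum.inl u ∧ y = Sum.inr u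

/-- Traces from different slots are disjoint: an injective `f` makes predecessors under `TraceStep`
unique, and slots have no predecessor. -/
lemma trace_unique {ι V : Type*} {f : ι ⊕ V → V ⊕ V} (hf : Function.Injective f) {a b : ι}
    {y : ι ⊕ V} (ha : Relation.ReflTransGen (TraceStep f) (Sum.inl a) y)
    (hb : Relation.ReflTransGen (TraceStep f) (Sum.inl b) y) : a = b := by
  have hno : ∀ (a : ι) x, Relation.ReflTransGen (TraceStep f) x (Sum.inl a) → x = Sum.inl a := by
    intro a x h
    rcases Relation.ReflTransGen.cases_tail h with h | ⟨z, -, u, -, h⟩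
    · exact h.symm
    · cases h
  have hu : Relator.RightUnique (Function.swap (TraceStep f)) := by
    rintro x y z ⟨u, h1, rfl⟩ ⟨u', h2, h3⟩
    obtain rfl := Sum.inr.inj h3
    exact hf (h1.trans h2.symm)
  rcases Relation.ReflTransGen.total_of_right_unique hu
    (Relation.reflTransGen_swap.2 ha) (Relation.reflTransGen_swap.2 hb) with h | h
  · exact (Sum.inl.inj (hno _ _ (Relation.reflTransGen_swap.1 h))).symm
  · exact Sum.inl.inj (hno _ _ (Relation.reflTransGen_swap.1 h))

/-- By finiteness, the trace from a slot stops, at an element to which `f` assigns a start. -/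
lemma exists_trace_start {ι V : Type*} [Finite ι] [Finite V] {f : ι ⊕ V → V ⊕ V}
    (hf : Function.Injective f) (a : ι) :
    ∃ y s, Relation.ReflTransGen (TraceStep f) (Sum.inl a) y ∧ f y = Sum.inr s := by
  by_contra! hcon
  let C := {y // Relation.ReflTransGen (TraceStep f) (Sum.inl a) y}
  have hC : ∀ y : C, ∃ u, f y.1 = Sum.inl u := by
    intro y
    cases h : f y.1 with
    | inl u => exact ⟨u, rfl⟩
    | inr s => exact (hcon y.1 s y.2 h).elim
  choose g hg using hC
  let G : C → C := fun y => ⟨Sum.inr (g y), y.2.tail ⟨g y, hg y, rfl⟩⟩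
  have hG : Function.Injective G := by
    intro y z h
    have h1 : g y = g z := Sum.inr.inj (congrArg Subtype.val h)
    exact Subtype.ext (hf (by rw [hg, hg, h1]))
  -- an injective self-map of a finite set is onto, but the slot `a` is not in its range
  obtain ⟨y, hy⟩ := Finite.surjective_of_injective hG ⟨Sum.inl a, Relation.ReflTransGen.refl⟩
  cases congrArg Subtype.val hy

/-- An injective assignment of tokens to the slots `ι`, where `e i` is the target of the slot `i`,
and to the vertices, each either idle or reached by an admissible token, yields one simple
path for each slot. -/
lemma exists_paths_of_injective {ι V : Type*} [Finite ι] [Finite V] {R : V → V → Prop} {S : Set V}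
    {e : ι → V} {f : ι ⊕ V → V ⊕ V} (hf : Function.Injective f)
    (hslot : ∀ i, f (Sum.inl i) ∈ arrivals R S (e i))
    (hvert : ∀ v, f (Sum.inr v) = Sum.inl v ∨ f (Sum.inr v) ∈ arrivals R S v) :
    ∃ p : ι → List V, (∀ i, IsSimplePath R (p i)) ∧
      (∀ i j v, v ∈ (p i).dropLast → v ∈ (p j).dropLast → i = j) ∧
      (∀ i, ∃ v ∈ S, (p i).head? = some v) ∧
      (∀ i j v, (p i).head? = some v → (p j).head? = some v → i = j) ∧
      (∀ i, (p i).getLast? = some (e i)) := by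
  have main : ∀ i, ∃ p : List V, IsSimplePath R p ∧
      (∀ v ∈ p.dropLast, Relation.ReflTransGen (TraceStep f) (Sum.inl i) (Sum.inr v)) ∧
      (∃ v ∈ S, p.head? = some v ∧
        ∃ y, Relation.ReflTransGen (TraceStep f) (Sum.inl i) y ∧ f y = Sum.inr v) ∧
      p.getLast? = some (e i) := by
    intro i
    let pos : ι ⊕ V → V := Sum.elim e id
    have hpos : ∀ y, f y = Sum.inl (pos y) ∨ f y ∈ arrivals R S (pos y) := by
      rintro (i | v)
      · exact Or.inr (hslot i)
      · exact hvert v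
    -- steps of `R` leaving a vertex of the trace
    let r : V → V → Prop := fun u v =>
      R u v ∧ Relation.ReflTransGen (TraceStep f) (Sum.inl i) (Sum.inr u)
    have hreach : ∀ y, Relation.ReflTransGen (TraceStep f) (Sum.inl i) y →
        Relation.ReflTransGen r (pos y) (e i) := by
      intro y hy
      induction hy with
      | refl => exact Relation.ReflTransGen.refl
      | @tail y z hy hyz ih =>
        have hz := hy.tail hyz
        obtain ⟨u, hu, rfl⟩ := hyz
        rcases hpos y with h | ⟨u', h, hR⟩ | ⟨h, -⟩
        · rw [hu] at h
          rw [← Sum.inl.inj h] at ih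
          exact ih
        · rw [hu] at h
          obtain rfl := Sum.inl.inj h
          exact ih.head ⟨hR, hz⟩
        · rw [hu] at h
          cases h
    obtain ⟨y, s, hy, hs⟩ := exists_trace_start hf i
    obtain ⟨p, ⟨hne, hnd, hch⟩, hhead, hlast⟩ := exists_isSimplePath (hreach y hy)
    refine ⟨p, ⟨hne, hnd, List.IsChain.imp (fun _ _ h => h.1) hch⟩, ?_, ?_, hlast⟩
    · intro v hv
      obtain ⟨w, hw⟩ := exists_rel_of_mem_dropLast hch hv
      exact hw.2
    · rcases hpos y with h | ⟨u', h, hR⟩ | ⟨h, hS⟩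
      · rw [hs] at h
        cases h
      · rw [hs] at h
        cases h
      · exact ⟨pos y, hS, hhead, y, hy, h⟩
  choose p h1 h2 h3 h4 using main
  refine ⟨p, h1, ?_, ?_, ?_, h4⟩
  · exact fun i j v hi hj => trace_unique hf (h2 i v hi) (h2 j v hj)
  · exact fun i => (h3 i).imp fun v hv => ⟨hv.1, hv.2.1⟩
  · intro i j v hi hj
    obtain ⟨s, -, hs, y, hy, hfy⟩ := h3 i
    obtain ⟨s', -, hs', y', hy', hfy'⟩ := h3 j
    obtain rfl : s = v := Option.some.inj (hs.symm.trans hi)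
    obtain rfl : s' = s := Option.some.inj (hs'.symm.trans hj)
    obtain rfl := hf (hfy.trans hfy'.symm)
    exact trace_unique hf hy hy'

/-! ### Combining the collections -/

/-- combining two partially-satisfying path collections. Let `R` be a
digraph on a finite vertex type, `S₀, R₁, R₂ ⊆ V` with `L⁰ ⊆ R₁ ∪ R₂`, `N : V → ℕ`, and
`α, α' ≥ 1` reals. Let `P` and `Q` be finite, internally vertex-disjoint collections of
simple paths ending in `R₁` (resp. `R₂`), starting at `S₀ ∪ ((R₁ ∪ R₂) \ L⁰)` with at most
one path of each collection starting at any vertex, with at least `N A / α` paths of `P`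
ending at each `A ∈ R₁` and at least `N A / α'` paths of `Q` ending at each `A ∈ R₂`. Then
there is a collection `Q*` of simple paths with every vertex a non-final vertex of at most
one path, every path starting at `S₀ ∪ ((R₁ ∪ R₂) \ L⁰)` with at most one path per start
vertex, and at least `⌊N A / (α + α')⌋` paths ending at each `A ∈ R₁ ∪ R₂`. -/
theorem combine_path_collections
    {V : Type*} [Fintype V] [DecidableEq V] (R : V → V → Prop)
    (S₀ R₁ R₂ L₀ : Set V) (hL : L₀ ⊆ R₁ ∪ R₂)
    (N : V → ℕ) (α α' : ℝ) (hα : 1 ≤ α) (hα' : 1 ≤ α')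
    (P Q : Finset (List V))
    (hPpath : ∀ p ∈ P, IsSimplePath R p) (hQpath : ∀ q ∈ Q, IsSimplePath R q)
    (hPint : ∀ p ∈ P, ∀ q ∈ P, p ≠ q → ∀ v ∈ p.dropLast, v ∉ q)
    (hQint : ∀ p ∈ Q, ∀ q ∈ Q, p ≠ q → ∀ v ∈ p.dropLast, v ∉ q)
    (hPend : ∀ p ∈ P, ∃ A ∈ R₁, p.getLast? = some A)
    (hQend : ∀ q ∈ Q, ∃ A ∈ R₂, q.getLast? = some A)
    (hPstart : ∀ p ∈ P, ∃ v ∈ S₀ ∪ ((R₁ ∪ R₂) \ L₀), p.head? = some v)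
    (hQstart : ∀ q ∈ Q, ∃ v ∈ S₀ ∪ ((R₁ ∪ R₂) \ L₀), q.head? = some v)
    (hPstartOnce : ∀ v : V, (P.filter (fun p => p.head? = some v)).card ≤ 1)
    (hQstartOnce : ∀ v : V, (Q.filter (fun q => q.head? = some v)).card ≤ 1)
    (hPcount : ∀ A ∈ R₁,
      (N A : ℝ) / α ≤ ((P.filter (fun p => p.getLast? = some A)).card : ℝ))
    (hQcount : ∀ A ∈ R₂,
      (N A : ℝ) / α' ≤ ((Q.filter (fun q => q.getLast? = some A)).card : ℝ)) :
    ∃ Qstar : Finset (List V),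
      (∀ p ∈ Qstar, IsSimplePath R p) ∧
      (∀ v : V, (Qstar.filter (fun p => v ∈ p.dropLast)).card ≤ 1) ∧
      (∀ p ∈ Qstar, ∃ v ∈ S₀ ∪ ((R₁ ∪ R₂) \ L₀), p.head? = some v) ∧
      (∀ v : V, (Qstar.filter (fun p => p.head? = some v)).card ≤ 1) ∧
      (∀ A ∈ R₁ ∪ R₂,
        ⌊(N A : ℝ) / (α + α')⌋ ≤
          ((Qstar.filter (fun p => p.getLast? = some A)).card : ℤ)) := by
  classical
  set S := S₀ ∪ ((R₁ ∪ R₂) \ L₀)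
  have hpos : 0 < α + α' := by linarith
  let d : V → ℕ := fun A => if A ∈ R₁ ∪ R₂ then ⌊(N A : ℝ) / (α + α')⌋₊ else 0
  -- each target is served either by `P` or by `Q`
  have hd : ∀ A, (α + α') * (d A : ℝ) ≤
      α * ((P.filter (fun p => p.getLast? = some A)).card : ℝ) +
        α' * ((Q.filter (fun p => p.getLast? = some A)).card : ℝ) := by
    intro A
    have hP0 : 0 ≤ α * ((P.filter (fun p => p.getLast? = some A)).card : ℝ) := by positivity
    have hQ0 : 0 ≤ α' * ((Q.filter (fun p => p.getLast? = some A)).card : ℝ) := by positivity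
    by_cases hA : A ∈ R₁ ∪ R₂
    · have h1 : (d A : ℝ) ≤ (N A : ℝ) / (α + α') := by
        simp only [d, if_pos hA]
        exact Nat.floor_le (by positivity)
      rw [le_div_iff₀ hpos] at h1
      rcases hA with hA | hA
      · have h2 := hPcount A hA
        rw [div_le_iff₀ (by linarith)] at h2
        linarith
      · have h2 := hQcount A hA
        rw [div_le_iff₀ (by linarith)] at h2
        linarith
    · simp only [d, if_neg hA]
      simp only [Nat.cast_zero, mul_zero]
      linarith
  let ι := Σ A : V, Fin (d A)
  let t : ι ⊕ V → Finset (V ⊕ V) := Sum.elim (fun i => (arrivals R S i.1).toFinset)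
    (fun v => insert (Sum.inl v) (arrivals R S v).toFinset)
  have hall : ∀ s : Finset (ι ⊕ V), s.card ≤ (s.biUnion t).card := by
    intro s
    let U := s.toRight
    let B := s.toLeft.image Sigma.fst
    have hU : ∀ u ∈ U, Sum.inl u ∈ s.biUnion t := fun u hu =>
      Finset.mem_biUnion.2 ⟨_, Finset.mem_toRight.1 hu, by simp [t]⟩
    have hM : ∀ v, v ∈ U ∨ v ∈ B → ∀ y ∈ arrivals R S v, y ∈ s.biUnion t := by
      rintro v (hv | hv) y hy
      · exact Finset.mem_biUnion.2 ⟨_, Finset.mem_toRight.1 hv, by simp [t, hy]⟩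
      · obtain ⟨i, hi, rfl⟩ := Finset.mem_image.1 hv
        exact Finset.mem_biUnion.2 ⟨_, Finset.mem_toLeft.1 hi, by simp [t, hy]⟩
    have hP := card_add_card_le_tokens hPpath hPint hPstart hPstartOnce U B _ hU hM
    have hQ := card_add_card_le_tokens hQpath hQint hQstart hQstartOnce U B _ hU hM
    have hs : s.card ≤ U.card + ∑ A ∈ B, d A := by
      have h1 : s.toLeft.card ≤ ∑ A ∈ B, d A := by
        calc s.toLeft.card ≤ (B.sigma fun A => (Finset.univ : Finset (Fin (d A)))).card :=
              Finset.card_le_card fun i hi => Finset.mem_sigma.2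
                ⟨Finset.mem_image_of_mem _ hi, Finset.mem_univ _⟩
          _ = ∑ A ∈ B, d A := by simp
      have h2 : s.toLeft.card + U.card = s.card := s.card_toLeft_add_card_toRight
      omega
    have hsum := Finset.sum_le_sum fun A (_ : A ∈ B) => hd A
    rw [← Finset.mul_sum, Finset.sum_add_distrib, ← Finset.mul_sum, ← Finset.mul_sum] at hsum
    have hP' : (U.card : ℝ) + ∑ A ∈ B, ((P.filter (fun p => p.getLast? = some A)).card : ℝ) ≤
      ((s.biUnion t).card : ℝ) := by exact_mod_cast hP
    have hQ' : (U.card : ℝ) + ∑ A ∈ B, ((Q.filter (fun p => p.getLast? = some A)).card : ℝ) ≤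
      ((s.biUnion t).card : ℝ) := by exact_mod_cast hQ
    have hs' : (s.card : ℝ) ≤ U.card + ∑ A ∈ B, (d A : ℝ) := by exact_mod_cast hs
    have hP2 := mul_le_mul_of_nonneg_left hP' (by linarith : 0 ≤ α)
    have hQ2 := mul_le_mul_of_nonneg_left hQ' (by linarith : 0 ≤ α')
    have hs2 := mul_le_mul_of_nonneg_left hs' hpos.le
    have : (s.card : ℝ) ≤ ((s.biUnion t).card : ℝ) := by
      refine le_of_mul_le_mul_left ?_ hpos
      linarith
    exact_mod_cast this
  obtain ⟨f, hf, hft⟩ := (Finset.all_card_le_biUnion_card_iff_exists_injective t).1 hall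
  obtain ⟨p, hp1, hp2, hp3, hp4, hp5⟩ := exists_paths_of_injective (R := R) (S := S)
    (e := Sigma.fst) hf (fun i => by simpa [t] using hft (Sum.inl i))
    (fun v => by simpa [t] using hft (Sum.inr v))
  refine ⟨Finset.univ.image p, ?_, ?_, ?_, ?_, ?_⟩
  · intro q hq
    obtain ⟨i, -, rfl⟩ := Finset.mem_image.1 hq
    exact hp1 i
  · intro v
    refine Finset.card_le_one.2 fun a ha b hb => ?_
    simp only [Finset.mem_filter, Finset.mem_image, Finset.mem_univ, true_and] at ha hb
    obtain ⟨⟨i, rfl⟩, hi⟩ := ha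
    obtain ⟨⟨j, rfl⟩, hj⟩ := hb
    rw [hp2 i j v hi hj]
  · intro q hq
    obtain ⟨i, -, rfl⟩ := Finset.mem_image.1 hq
    exact hp3 i
  · intro v
    refine Finset.card_le_one.2 fun a ha b hb => ?_
    simp only [Finset.mem_filter, Finset.mem_image, Finset.mem_univ, true_and] at ha hb
    obtain ⟨⟨i, rfl⟩, hi⟩ := ha
    obtain ⟨⟨j, rfl⟩, hj⟩ := hb
    rw [hp4 i j v hi hj]
  · intro A hA
    have hpinj : Function.Injective p := by
      intro i j hij
      obtain ⟨v, -, hv⟩ := hp3 i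
      exact hp4 i j v hv (hij ▸ hv)
    have hle : d A ≤ ((Finset.univ.image p).filter (fun q => q.getLast? = some A)).card := by
      calc d A = (Finset.univ.image fun k : Fin (d A) => p ⟨A, k⟩).card := by
            have hk : Function.Injective fun k : Fin (d A) => p ⟨A, k⟩ :=
              hpinj.comp sigma_mk_injective
            rw [Finset.card_image_of_injective _ hk, Finset.card_univ, Fintype.card_fin]
        _ ≤ _ := Finset.card_le_card fun q hq => by
            obtain ⟨k, -, rfl⟩ := Finset.mem_image.1 hq
            exact Finset.mem_filter.2 ⟨Finset.mem_image_of_mem _ (Finset.mem_univ _), hp5 ⟨A, k⟩⟩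
    have hdA : (d A : ℤ) = ⌊(N A : ℝ) / (α + α')⌋ := by
      simp only [d, if_pos hA]
      exact Int.natCast_floor_eq_floor (by positivity)
    rw [← hdA]
    exact_mod_cast hle
end

section
/- Let 𝒜 be a finite set of agents, I a finite set of items, u : 𝒜 → I → ℝ nonnegative utilities, and M > 0. Assume the instance is 2-restricted: for every item i, the number of agents A with u A i > 0 is at most 2. Suppose there exists z : 𝒜 → Finset I → ℝ, nonnegative, such that: (i) for every agent A, ∑_{S ⊆ I} z A S = 1, and z A S > 0 implies ∑_{i ∈ S} u A i ≥ M; and (ii) for every item i, ∑_{A ∈ 𝒜} ∑_{S : i ∈ S} z A S ≤ 1. Then there exists an allocation, i.e. a function Φ assigning to each agent A a set Φ(A) ⊆ I with Φ(A) ∩ Φ(A') = ∅ whenever A ≠ A', such that ∑_{i ∈ Φ(A)} u A i ≥ M / 2 for every agent A ∈ 𝒜. -/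
/-!
The proof is combinatorial and uses the fractional solution only through its support. Let `T a` be
the set of items of positive utility for `a` that occur in some configuration in the support of
`z a`. Every item lies in at most two of the sets `T a`, and `T a` has utility at least `M`.

List `T a` by decreasing utility `v₁ ≥ v₂ ≥ ⋯`.

* If `v₂ + v₃ + ⋯ ≥ M`, pair the items as `{1, 2}, {3, 4}, …`. Any set hitting all pairs has utility
  at least `v₂ + v₄ + ⋯ ≥ (v₂ + v₃ + ⋯) / 2 ≥ M / 2`.
* Otherwise every supported configuration of `a` contains the top item, which therefore has mass
  `1` at `a` and lies in no other `T b`. It is reserved for `a`, and the remaining items are paired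
  as `{2, 3}, {4, 5}, …`. The top item together with any set hitting all pairs has utility at least
  `v₁ + v₃ + v₅ + ⋯ ≥ (v₁ + v₂ + ⋯) / 2 ≥ M / 2`.

It remains to choose distinct representatives for all pairs of all agents. Each pair has two items
and each item is in at most two pairs (one per agent), so Hall's condition holds.
-/

/-- Pairing consecutive items in decreasing order of value: a set `W` hitting every pair collects
at least half of the total value of `T` minus its largest value. -/
lemma exists_pairing {I : Type*} [DecidableEq I] (v : I → ℝ) (hv : ∀ i, 0 ≤ v i) (T : Finset I) :
    ∃ P : Finset (Finset I),
      (∀ p ∈ P, p.card = 2 ∧ p ⊆ T) ∧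
      (∀ p ∈ P, ∀ q ∈ P, ∀ i, i ∈ p → i ∈ q → p = q) ∧
      ∀ W : Finset I, (∀ p ∈ P, ∃ i ∈ p, i ∈ W) → ∀ B : ℝ, 0 ≤ B → (∀ i ∈ T, v i ≤ B) →
        ∑ i ∈ T, v i ≤ B + 2 * ∑ i ∈ T ∩ W, v i := by
  induction T using Finset.strongInduction with
  | H T ih =>
  rcases T.eq_empty_or_nonempty with rfl | hT
  · exact ⟨∅, by simp, by simp, fun W _ B hB _ => by simpa using hB⟩
  obtain ⟨t, ht, htmax⟩ := T.exists_max_image v hT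
  rcases (T.erase t).eq_empty_or_nonempty with h0 | hT'
  · refine ⟨∅, by simp, by simp, fun W _ B _ hTB => ?_⟩
    have h1 := Finset.add_sum_erase T v ht
    rw [h0, Finset.sum_empty] at h1
    have h2 : 0 ≤ ∑ i ∈ T ∩ W, v i := Finset.sum_nonneg fun i _ => hv i
    linarith [hTB t ht]
  obtain ⟨t', ht', htmax'⟩ := (T.erase t).exists_max_image v hT'
  set R := (T.erase t).erase t' with hR
  have hRT : R ⊂ T :=
    (Finset.erase_subset _ _).trans_ssubset (Finset.erase_ssubset ht)
  obtain ⟨P, hP, hdisj, hval⟩ := ih R hRT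
  have htR : t ∉ R := by simp [hR]
  have htR' : t' ∉ R := by simp [hR]
  have hne : t' ≠ t := (Finset.mem_erase.mp ht').1
  have ht'T : t' ∈ T := (Finset.mem_erase.mp ht').2
  have hnew : ∀ q ∈ P, ∀ i, i ∈ ({t, t'} : Finset I) → i ∉ q := by
    intro q hq i hi hiq
    have := (hP q hq).2 hiq
    rcases Finset.mem_insert.mp hi with rfl | hi
    · exact htR this
    · rw [Finset.mem_singleton.mp hi] at this
      exact htR' this
  refine ⟨insert {t, t'} P, ?_, ?_, ?_⟩
  · intro p hp
    rcases Finset.mem_insert.mp hp with rfl | hp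
    · refine ⟨Finset.card_pair hne.symm, ?_⟩
      intro i hi
      rcases Finset.mem_insert.mp hi with rfl | hi
      · exact ht
      · rwa [Finset.mem_singleton.mp hi]
    · exact ⟨(hP p hp).1, (hP p hp).2.trans hRT.subset⟩
  · intro p hp q hq i hip hiq
    rcases Finset.mem_insert.mp hp with rfl | hp <;> rcases Finset.mem_insert.mp hq with rfl | hq
    · rfl
    · exact absurd hiq (hnew q hq i hip)
    · exact absurd hip (hnew p hp i hiq)
    · exact hdisj p hp q hq i hip hiq
  · intro W hW B _ hTB
    have hrec := hval W (fun p hp => hW p (Finset.mem_insert_of_mem hp)) (v t') (hv t')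
      (fun i hi => htmax' i (Finset.mem_of_mem_erase hi))
    obtain ⟨w, hw, hwW⟩ := hW {t, t'} (Finset.mem_insert_self _ _)
    have hwv : v t' ≤ v w ∧ w ∈ T ∧ w ∉ R := by
      rcases Finset.mem_insert.mp hw with rfl | hw
      · exact ⟨htmax t' ht'T, ht, htR⟩
      · rw [Finset.mem_singleton.mp hw]
        exact ⟨le_rfl, ht'T, htR'⟩
    have hle : v w + ∑ i ∈ R ∩ W, v i ≤ ∑ i ∈ T ∩ W, v i := by
      rw [← Finset.sum_insert (fun h => hwv.2.2 (Finset.mem_inter.mp h).1)]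
      refine Finset.sum_le_sum_of_subset_of_nonneg ?_ fun i _ _ => hv i
      intro i hi
      rcases Finset.mem_insert.mp hi with rfl | hi
      · exact Finset.mem_inter.mpr ⟨hwv.2.1, hwW⟩
      · exact Finset.inter_subset_inter_right hRT.subset hi
    have h1 := Finset.add_sum_erase T v ht
    have h2 := Finset.add_sum_erase (T.erase t) v ht'
    linarith [hTB t ht, hwv.1]

/-- A single agent with values `v` on a set `T` of total value at least `M` can reserve a set `D`
and pair items of `T \ D` so that `D` with any set hitting the pairs is worth `M / 2`. Only items
whose removal leaves less than `M` are reserved. -/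
lemma exists_reserve_pairing {I : Type*} [DecidableEq I] (v : I → ℝ) (hv : ∀ i, 0 ≤ v i)
    (T : Finset I) (M : ℝ) (hM : 0 < M) (hT : M ≤ ∑ i ∈ T, v i) :
    ∃ (D : Finset I) (P : Finset (Finset I)),
      (∀ i ∈ D, i ∈ T ∧ ∑ j ∈ T.erase i, v j < M) ∧
      (∀ p ∈ P, p.card = 2 ∧ p ⊆ T \ D) ∧
      (∀ p ∈ P, ∀ q ∈ P, ∀ i, i ∈ p → i ∈ q → p = q) ∧
      ∀ W : Finset I, D ⊆ W → (∀ p ∈ P, ∃ i ∈ p, i ∈ W) → M / 2 ≤ ∑ i ∈ W, v i := by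
  have hne : T.Nonempty := by
    by_contra h
    rw [Finset.not_nonempty_iff_eq_empty.mp h, Finset.sum_empty] at hT
    linarith
  obtain ⟨t, ht, htmax⟩ := T.exists_max_image v hne
  have hsum := Finset.add_sum_erase T v ht
  by_cases hbig : ∑ j ∈ T.erase t, v j < M
  · obtain ⟨P, hP, hdisj, hval⟩ := exists_pairing v hv (T.erase t)
    refine ⟨{t}, P, ?_, ?_, hdisj, ?_⟩
    · intro i hi
      rw [Finset.mem_singleton.mp hi]
      exact ⟨ht, hbig⟩
    · rwa [Finset.sdiff_singleton_eq_erase]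
    · intro W hDW hW
      have h1 := hval W hW (v t) (hv t) (fun i hi => htmax i (Finset.mem_of_mem_erase hi))
      have h2 : v t + ∑ i ∈ T.erase t ∩ W, v i ≤ ∑ i ∈ W, v i := by
        rw [← Finset.sum_insert (by simp)]
        refine Finset.sum_le_sum_of_subset_of_nonneg ?_ fun i _ _ => hv i
        intro i hi
        rcases Finset.mem_insert.mp hi with rfl | hi
        · exact hDW (Finset.mem_singleton_self _)
        · exact (Finset.mem_inter.mp hi).2
      linarith
  · obtain ⟨P, hP, hdisj, hval⟩ := exists_pairing v hv T
    refine ⟨∅, P, by simp, by simpa using hP, hdisj, ?_⟩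
    intro W _ hW
    have h1 := hval W hW (v t) (hv t) htmax
    have h2 : ∑ i ∈ T ∩ W, v i ≤ ∑ i ∈ W, v i :=
      Finset.sum_le_sum_of_subset_of_nonneg Finset.inter_subset_right fun i _ _ => hv i
    linarith

/-- Distinct representatives for pairs, provided every item is in at most two of them: Hall's
condition follows by counting incidences. -/
lemma exists_injective_of_pairs {ι I : Type*} [Fintype ι] [DecidableEq I] (p : ι → Finset I)
    (hp : ∀ x, (p x).card = 2)
    (hI : ∀ i, (Finset.univ.filter (fun x => i ∈ p x)).card ≤ 2) :
    ∃ f : ι → I, Function.Injective f ∧ ∀ x, f x ∈ p x := by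
  rw [← Finset.all_card_le_biUnion_card_iff_exists_injective]
  intro s
  have h := Finset.card_mul_le_card_mul (s := s) (t := s.biUnion p) (m := 2) (n := 2)
    (fun x i => i ∈ p x) ?_ ?_
  · omega
  · intro x hx
    rw [← hp x]
    refine Finset.card_le_card fun i hi => ?_
    exact Finset.mem_filter.mpr ⟨Finset.mem_biUnion.mpr ⟨x, hx, hi⟩, hi⟩
  · intro i _
    refine (Finset.card_le_card fun x hx => ?_).trans (hI i)
    exact Finset.mem_filter.mpr ⟨Finset.mem_univ _, (Finset.mem_filter.mp hx).2⟩


/-- factor-2 rounding of the configuration LP for 2-restricted instances.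
Let `u : A → I → ℝ` be nonnegative utilities of finitely many agents for finitely many items,
`M > 0`, and suppose every item has positive utility for at most two agents. If `z` is a
nonnegative feasible fractional solution of the configuration LP with target `M` (each agent's
configuration masses sum to `1`, configurations in the support have utility at least `M`, and
each item has total mass at most `1`), then there is an allocation (pairwise disjoint sets of
items) giving every agent utility at least `M/2`. -/
theorem two_restricted_configuration_LP_rounding
    {A I : Type*} [Fintype A] [Fintype I] [DecidableEq A] [DecidableEq I]
    (u : A → I → ℝ) (hu : ∀ a i, 0 ≤ u a i) (M : ℝ) (hM : 0 < M)
    (h2 : ∀ i : I, (Finset.univ.filter (fun a : A => 0 < u a i)).card ≤ 2)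
    (z : A → Finset I → ℝ) (hz : ∀ a S, 0 ≤ z a S)
    (hz1 : ∀ a : A, ∑ S : Finset I, z a S = 1)
    (hzM : ∀ a S, 0 < z a S → M ≤ ∑ i ∈ S, u a i)
    (hzItem : ∀ i : I,
      ∑ a : A, ∑ S ∈ Finset.univ.filter (fun S : Finset I => i ∈ S), z a S ≤ 1) :
    ∃ Φ : A → Finset I,
      (∀ a a' : A, a ≠ a' → Disjoint (Φ a) (Φ a')) ∧
      (∀ a : A, M / 2 ≤ ∑ i ∈ Φ a, u a i) := by
  classical
  let T : A → Finset I := fun a =>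
    Finset.univ.filter (fun i => 0 < u a i ∧ ∃ S, 0 < z a S ∧ i ∈ S)
  have hTmem : ∀ a i, i ∈ T a ↔ 0 < u a i ∧ ∃ S, 0 < z a S ∧ i ∈ S := by
    intro a i
    simp [T]
  have hST : ∀ a S, 0 < z a S → ∀ i ∈ S, i ∉ T a → u a i = 0 := by
    intro a S hS i hi hiT
    by_contra h
    exact hiT ((hTmem a i).mpr ⟨lt_of_le_of_ne (hu a i) (Ne.symm h), S, hS, hi⟩)
  -- A supported configuration avoiding `i` is worth no more than `T a` without `i`.
  have hSi : ∀ a S (i : I), 0 < z a S → i ∉ S → M ≤ ∑ j ∈ (T a).erase i, u a j := by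
    intro a S i hS hi
    calc M ≤ ∑ j ∈ S, u a j := hzM a S hS
      _ = ∑ j ∈ S ∩ T a, u a j := by
        refine (Finset.sum_subset Finset.inter_subset_left fun j hj hj' => ?_).symm
        exact hST a S hS j hj fun h => hj' (Finset.mem_inter.mpr ⟨hj, h⟩)
      _ ≤ _ := by
        refine Finset.sum_le_sum_of_subset_of_nonneg ?_ fun j _ _ => hu a j
        intro j hj
        rw [Finset.mem_inter] at hj
        exact Finset.mem_erase.mpr ⟨fun h => hi (h ▸ hj.1), hj.2⟩
  have hTM : ∀ a, M ≤ ∑ i ∈ T a, u a i := by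
    intro a
    obtain ⟨S, -, hS⟩ : ∃ S ∈ (Finset.univ : Finset (Finset I)), 0 < z a S := by
      by_contra! h
      have := Finset.sum_nonpos h
      linarith [hz1 a]
    calc M ≤ ∑ j ∈ S, u a j := hzM a S hS
      _ = ∑ j ∈ S ∩ T a, u a j := by
        refine (Finset.sum_subset Finset.inter_subset_left fun j hj hj' => ?_).symm
        exact hST a S hS j hj fun h => hj' (Finset.mem_inter.mpr ⟨hj, h⟩)
      _ ≤ _ := Finset.sum_le_sum_of_subset_of_nonneg Finset.inter_subset_right
        fun j _ _ => hu a j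
  choose D P hD hP hdisj hval using fun a =>
    exists_reserve_pairing (u a) (hu a) (T a) M hM (hTM a)
  -- A reserved item has mass `1` at its agent, so it has mass `0` at every other agent.
  have hDother : ∀ a b i, a ≠ b → i ∈ D a → i ∉ T b := by
    intro a b i hab hi hib
    have hall : ∀ S, i ∉ S → z a S = 0 := by
      intro S hiS
      by_contra h
      have := hSi a S i (lt_of_le_of_ne (hz a S) (Ne.symm h)) hiS
      linarith [(hD a i hi).2]
    have hxa : ∑ S ∈ Finset.univ.filter (fun S : Finset I => i ∈ S), z a S = 1 := by
      rw [← hz1 a]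
      refine Finset.sum_subset (Finset.subset_univ _) fun S _ hS => hall S ?_
      simpa using hS
    obtain ⟨-, S, hS, hiS⟩ := (hTmem b i).mp hib
    have hxb : 0 < ∑ S ∈ Finset.univ.filter (fun S : Finset I => i ∈ S), z b S :=
      Finset.sum_pos' (fun S _ => hz b S) ⟨S, by simpa using hiS, hS⟩
    have hpair := Finset.sum_le_sum_of_subset_of_nonneg
      (f := fun a => ∑ S ∈ Finset.univ.filter (fun S : Finset I => i ∈ S), z a S)
      (Finset.subset_univ ({a, b} : Finset A))
      (fun c _ _ => Finset.sum_nonneg fun S _ => hz c S)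
    rw [Finset.sum_pair hab] at hpair
    linarith [hzItem i]
  obtain ⟨f, hf, hfp⟩ := exists_injective_of_pairs
    (fun x : Σ a, {p // p ∈ P a} => x.2.1) (fun x => (hP x.1 _ x.2.2).1) (by
      intro i
      refine (Finset.card_le_card_of_injOn (fun x => x.1) ?_ ?_).trans (h2 i)
      · rintro ⟨a, p, hp⟩ hx
        have hip : i ∈ p := by simpa using hx
        have := (hTmem a i).mp (Finset.mem_sdiff.mp ((hP a p hp).2 hip)).1
        simpa using this.1
      · rintro ⟨a, p, hp⟩ hx ⟨b, q, hq⟩ hy (rfl : a = b)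
        have hip : i ∈ p := by simpa using hx
        have hiq : i ∈ q := by simpa using hy
        obtain rfl := hdisj a p hp q hq i hip hiq
        rfl)
  have hfT : ∀ a p, f ⟨a, p⟩ ∈ T a := fun a p =>
    (Finset.mem_sdiff.mp ((hP a p.1 p.2).2 (hfp ⟨a, p⟩))).1
  refine ⟨fun a => D a ∪ Finset.univ.image (fun p : {p // p ∈ P a} => f ⟨a, p⟩), ?_, ?_⟩
  · intro a b hab
    rw [Finset.disjoint_left]
    intro i hia hib
    rw [Finset.mem_union, Finset.mem_image] at hia hib
    rcases hia with hia | ⟨p, -, rfl⟩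
    · rcases hib with hib | ⟨q, -, rfl⟩
      · exact hDother a b i hab hia (hD b i hib).1
      · exact hDother a b _ hab hia (hfT b q)
    · rcases hib with hib | ⟨q, -, hq⟩
      · exact hDother b a _ hab.symm hib (hfT a p)
      · exact hab (congrArg Sigma.fst (hf hq)).symm
  · intro a
    refine hval a _ Finset.subset_union_left fun p hp => ?_
    exact ⟨f ⟨a, p, hp⟩, hfp ⟨a, p, hp⟩, Finset.mem_union_right _
      (Finset.mem_image_of_mem (fun p : {p // p ∈ P a} => f ⟨a, p⟩)
        (Finset.mem_univ (⟨p, hp⟩ : {p // p ∈ P a})))⟩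
end
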